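/- Let a ≥ 1 and 1 ≤ k ≤ a be integers, and let T_a be the triangle in ℝ² with vertices (ρ_i, ρ_i²) for i = 1,2,3, where ρ₁, ρ₂, ρ₃ are the roots of f_a. Then the number of lattice points in the dilate kT_a equals k²(a²+3a+9)/2 + 1 if k is even, and k²(a²+3a+9)/2 - 1/2 if k is odd. -/

import Mathlib

/-!
If `ρ` is a root of `f_a`, the other two are `-1/(1 + ρ)` and `-1 - 1/ρ`. In the lattice coordinates
`u = x + k`, `v = y - (a + 1) x - k`, `w = (a + 3) k - u - v` this order-three symmetry becomes the
cyclic shift `(u, v, w) ↦ (v, w, u)`: with `ρ` the largest root, `k T_a` is cut out by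
`u ≤ ρ v + (2 - 1/(1 + ρ)) k` and its two cyclic shifts. As `a + 1 < ρ` and `k < ρ`, its lattice
points have `u, v, w ≥ 0`, and each of the three inequalities only removes, from one corner of the
simplex `u + v + w = (a + 3) k`, the points with `0 ≤ v < k` and
`u > (a + 1) v + 2 k - [2 v < k]`. The three corners are disjoint, and both they and the simplex are
counted row by row.
-/

open Finset
open scoped Pointwise

section Roots

variable {K : Type*} [Field K] {a x ρ : K}

/-- The simplest cubic polynomial `f_a`, as a function of `x`. -/
def simplestCubic {R : Type*} [CommRing R] (a x : R) : R :=
  x ^ 3 - a * x ^ 2 - (a + 3) * x - 1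

lemma ne_zero_of_simplestCubic_eq_zero (hρ : simplestCubic a ρ = 0) : ρ ≠ 0 := by
  rintro rfl
  simp [simplestCubic] at hρ

lemma one_add_ne_zero_of_simplestCubic_eq_zero (hρ : simplestCubic a ρ = 0) : 1 + ρ ≠ 0 := by
  intro h
  obtain rfl : ρ = -1 := by linear_combination h
  exact one_ne_zero (α := K) (by linear_combination (norm := (unfold simplestCubic; ring)) hρ)

lemma param_eq_of_simplestCubic_eq_zero (hρ : simplestCubic a ρ = 0) :
    a = ρ - 1 - ρ⁻¹ - (1 + ρ)⁻¹ := by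
  have h₀ := ne_zero_of_simplestCubic_eq_zero hρ
  have h₁ := one_add_ne_zero_of_simplestCubic_eq_zero hρ
  field_simp
  linear_combination (norm := (unfold simplestCubic; ring)) -hρ

lemma simplestCubic_eq_mul (hρ : simplestCubic a ρ = 0) (x : K) :
    simplestCubic a x = (x - ρ) * (x - (-(1 + ρ)⁻¹)) * (x - (-1 - ρ⁻¹)) := by
  have h₀ := ne_zero_of_simplestCubic_eq_zero hρ
  have h₁ := one_add_ne_zero_of_simplestCubic_eq_zero hρ
  rw [simplestCubic, param_eq_of_simplestCubic_eq_zero hρ]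
  field_simp
  ring

lemma simplestCubic_eq_zero_iff (hρ : simplestCubic a ρ = 0) :
    simplestCubic a x = 0 ↔ x = ρ ∨ x = -(1 + ρ)⁻¹ ∨ x = -1 - ρ⁻¹ := by
  rw [simplestCubic_eq_mul hρ, mul_eq_zero, mul_eq_zero, or_assoc]
  simp only [sub_eq_zero]

variable [LinearOrder K] [IsStrictOrderedRing K] {ρ₁ ρ₂ ρ₃ : K}

theorem roots_eq_of_simplestCubic_eq_zero (h12 : ρ₁ < ρ₂) (h23 : ρ₂ < ρ₃)
    (h1 : simplestCubic a ρ₁ = 0) (h2 : simplestCubic a ρ₂ = 0) (h3 : simplestCubic a ρ₃ = 0) :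
    0 < ρ₃ ∧ ρ₁ = -1 - ρ₃⁻¹ ∧ ρ₂ = -(1 + ρ₃)⁻¹ := by
  have h₀ := ne_zero_of_simplestCubic_eq_zero h3
  have h₁ := one_add_ne_zero_of_simplestCubic_eq_zero h3
  have conjugates : (ρ₁ = -1 - ρ₃⁻¹ ∧ ρ₂ = -(1 + ρ₃)⁻¹) ∨
      (ρ₁ = -(1 + ρ₃)⁻¹ ∧ ρ₂ = -1 - ρ₃⁻¹) := by
    rcases (simplestCubic_eq_zero_iff h3).1 h1 with h | h | h <;>
      rcases (simplestCubic_eq_zero_iff h3).1 h2 with h' | h' | h' <;>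
      first
        | exact Or.inl ⟨h, h'⟩
        | exact Or.inr ⟨h, h'⟩
        | exact absurd (h.trans h'.symm) h12.ne
        | linarith
  have hprod : ρ₁ * ρ₂ * ρ₃ = 1 := by
    rcases conjugates with ⟨rfl, rfl⟩ | ⟨rfl, rfl⟩ <;> field_simp <;> ring
  have hpos : 0 < ρ₃ := by
    by_contra! hle
    have : 0 < ρ₁ * ρ₂ := mul_pos_of_neg_of_neg (by linarith) (by linarith)
    linarith [mul_nonpos_of_nonneg_of_nonpos this.le hle]
  refine ⟨hpos, conjugates.resolve_right ?_⟩
  rintro ⟨rfl, rfl⟩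
  have : (1 + ρ₃)⁻¹ < 1 := inv_lt_one_of_one_lt₀ (by linarith)
  linarith [inv_pos.2 hpos]

end Roots

section ParabolaTriangle

variable {K : Type*} [Field K]

/-- The height of `p` above the line through the points `(s, s ^ 2)` and `(t, t ^ 2)`. -/
def chordGap (s t : K) (p : K × K) : K :=
  p.2 - (s + t) * p.1 + s * t

lemma isLinearMap_chordGap_linearPart (s t : K) :
    IsLinearMap K fun p : K × K => p.2 - (s + t) * p.1 where
  map_add p q := by simp only [Prod.fst_add, Prod.snd_add]; ring
  map_smul c p := by simp only [Prod.smul_fst, Prod.smul_snd, smul_eq_mul]; ring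

variable [LinearOrder K] [IsStrictOrderedRing K]

lemma convex_chordGap_nonneg (s t : K) : Convex K {p | 0 ≤ chordGap s t p} := by
  simpa only [chordGap, neg_le_iff_add_nonneg] using
    convex_halfSpace_ge (isLinearMap_chordGap_linearPart s t) (-(s * t))

lemma convex_chordGap_nonpos (s t : K) : Convex K {p | chordGap s t p ≤ 0} := by
  simpa only [chordGap, le_neg_iff_add_nonpos_right] using
    convex_halfSpace_le (isLinearMap_chordGap_linearPart s t) (-(s * t))

variable {r₁ r₂ r₃ : K}

lemma convexHull_parabola_subset (h12 : r₁ ≤ r₂) (h23 : r₂ ≤ r₃) :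
    convexHull K {(r₁, r₁ ^ 2), (r₂, r₂ ^ 2), (r₃, r₃ ^ 2)} ⊆
      {p | 0 ≤ chordGap r₂ r₃ p} ∩ ({p | chordGap r₁ r₃ p ≤ 0} ∩ {p | 0 ≤ chordGap r₁ r₂ p}) := by
  refine convexHull_min ?_ ((convex_chordGap_nonneg _ _).inter
    ((convex_chordGap_nonpos _ _).inter (convex_chordGap_nonneg _ _)))
  have gap (s t r : K) : chordGap s t (r, r ^ 2) = (r - s) * (r - t) := by
    rw [chordGap]; ring
  have p12 := sub_nonneg.2 h12
  have p23 := sub_nonneg.2 h23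
  have p13 := sub_nonneg.2 (h12.trans h23)
  rintro p (rfl | rfl | rfl) <;>
    simp only [Set.mem_inter_iff, Set.mem_ofPred_eq, gap] <;>
    refine ⟨?_, ?_, ?_⟩ <;> nlinarith [mul_nonneg p12 p23, mul_nonneg p12 p13, mul_nonneg p13 p23]

lemma mem_convexHull_parabola_of_chordGap (h12 : r₁ < r₂) (h23 : r₂ < r₃) {p : K × K}
    (h₁ : 0 ≤ chordGap r₂ r₃ p) (h₂ : chordGap r₁ r₃ p ≤ 0) (h₃ : 0 ≤ chordGap r₁ r₂ p) :
    p ∈ convexHull K {(r₁, r₁ ^ 2), (r₂, r₂ ^ 2), (r₃, r₃ ^ 2)} := by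
  have := sub_pos.2 h12
  have := sub_pos.2 h23
  have := sub_pos.2 (h12.trans h23)
  -- The barycentric coordinates of `p`, by Lagrange interpolation at `r₁`, `r₂`, `r₃`.
  let w : Fin 3 → K := ![chordGap r₂ r₃ p / ((r₂ - r₁) * (r₃ - r₁)),
    -chordGap r₁ r₃ p / ((r₂ - r₁) * (r₃ - r₂)), chordGap r₁ r₂ p / ((r₃ - r₁) * (r₃ - r₂))]
  let z : Fin 3 → K × K := ![(r₁, r₁ ^ 2), (r₂, r₂ ^ 2), (r₃, r₃ ^ 2)]
  have hw : ∀ i, 0 ≤ w i := by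
    intro i
    fin_cases i
    · exact div_nonneg h₁ (by positivity)
    · exact div_nonneg (neg_nonneg.2 h₂) (by positivity)
    · exact div_nonneg h₃ (by positivity)
  have hsum : ∑ i, w i = 1 := by
    simp only [Fin.sum_univ_three, w, Matrix.cons_val, chordGap]
    field_simp
    ring
  have hcomb : ∑ i, w i • z i = p := by
    simp only [Fin.sum_univ_three, w, z, Matrix.cons_val, Prod.ext_iff, chordGap, Prod.smul_mk,
      Prod.mk_add_mk, smul_eq_mul]
    constructor <;> field_simp <;> ring
  rw [← hcomb]
  refine (convex_convexHull K _).sum_mem (fun i _ => hw i) hsum fun i _ => ?_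
  apply subset_convexHull
  fin_cases i <;> simp [z]

theorem mem_convexHull_parabola_iff (h12 : r₁ < r₂) (h23 : r₂ < r₃) {p : K × K} :
    p ∈ convexHull K {(r₁, r₁ ^ 2), (r₂, r₂ ^ 2), (r₃, r₃ ^ 2)} ↔
      0 ≤ chordGap r₂ r₃ p ∧ chordGap r₁ r₃ p ≤ 0 ∧ 0 ≤ chordGap r₁ r₂ p :=
  ⟨fun hp => convexHull_parabola_subset h12.le h23.le hp,
    fun ⟨h₁, h₂, h₃⟩ => mem_convexHull_parabola_of_chordGap h12 h23 h₁ h₂ h₃⟩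

end ParabolaTriangle

section EdgeInequalities

variable {K : Type*} [Field K]

/-- The slack in `u ≤ ρ v + (2 - 1/(1 + ρ)) k`, the inequality which, with its cyclic shifts, cuts
out the dilated triangle in the coordinates `u = x + k`, `v = y - (a + 1) x - k`,
`w = (a + 3) k - u - v`. -/
def edgeGap (ρ k u v : K) : K :=
  ρ * v + (2 - (1 + ρ)⁻¹) * k - u

variable [LinearOrder K] [IsStrictOrderedRing K] {a k ρ ρ₁ ρ₂ ρ₃ x y u v w : K}

theorem mem_smul_convexHull_iff_edgeGap_nonneg (h12 : ρ₁ < ρ₂) (h23 : ρ₂ < ρ₃)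
    (h1 : simplestCubic a ρ₁ = 0) (h2 : simplestCubic a ρ₂ = 0) (h3 : simplestCubic a ρ₃ = 0)
    (hk : 0 < k) (hu : u = x + k) (hv : v = y - (a + 1) * x - k) (hw : u + v + w = (a + 3) * k) :
    (x, y) ∈ k • convexHull K {(ρ₁, ρ₁ ^ 2), (ρ₂, ρ₂ ^ 2), (ρ₃, ρ₃ ^ 2)} ↔
      0 ≤ edgeGap ρ₃ k u v ∧ 0 ≤ edgeGap ρ₃ k v w ∧ 0 ≤ edgeGap ρ₃ k w u := by
  rw [Set.mem_smul_set_iff_inv_smul_mem₀ hk.ne', mem_convexHull_parabola_iff h12 h23]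
  obtain ⟨hpos, hρ₁, hρ₂⟩ := roots_eq_of_simplestCubic_eq_zero h12 h23 h1 h2 h3
  have ha := param_eq_of_simplestCubic_eq_zero h3
  obtain rfl : w = (a + 3) * k - u - v := by linear_combination hw
  have gap₁ : edgeGap ρ₃ k u v = ρ₃ * k * chordGap ρ₂ ρ₃ (k⁻¹ • (x, y)) := by
    simp only [edgeGap, chordGap, Prod.smul_mk, smul_eq_mul, hu, hv, hρ₂, ha]
    field_simp
    ring
  have gap₂ : edgeGap ρ₃ k v ((a + 3) * k - u - v) =
      (1 + ρ₃) * k * -chordGap ρ₁ ρ₃ (k⁻¹ • (x, y)) := by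
    simp only [edgeGap, chordGap, Prod.smul_mk, smul_eq_mul, hu, hv, hρ₁, ha]
    field_simp
    ring
  have gap₃ : edgeGap ρ₃ k ((a + 3) * k - u - v) u = k * chordGap ρ₁ ρ₂ (k⁻¹ • (x, y)) := by
    simp only [edgeGap, chordGap, Prod.smul_mk, smul_eq_mul, hu, hv, hρ₁, hρ₂, ha]
    field_simp
    ring
  rw [gap₁, gap₂, gap₃, mul_nonneg_iff_of_pos_left (by positivity),
    mul_nonneg_iff_of_pos_left (by positivity), mul_nonneg_iff_of_pos_left hk, neg_nonneg]

lemma add_one_lt_of_param_eq (hρ : 0 < ρ) (ha : a = ρ - 1 - ρ⁻¹ - (1 + ρ)⁻¹) : a + 1 < ρ := by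
  have : 0 < (1 + ρ)⁻¹ := by positivity
  linarith [inv_pos.2 hρ]

lemma neg_one_lt_of_edgeGap_nonneg (hρ : 0 < ρ) (ha : a = ρ - 1 - ρ⁻¹ - (1 + ρ)⁻¹) (hkρ : k < ρ)
    (hsum : u + v + w = (a + 3) * k) (huv : 0 ≤ edgeGap ρ k u v) (hwu : 0 ≤ edgeGap ρ k w u) :
    -1 < v := by
  -- Eliminating `u` and `w` from the two inequalities.
  have hcomb : (ρ + 1) * edgeGap ρ k u v + edgeGap ρ k w u = (ρ ^ 2 + ρ + 1) * (v + k * ρ⁻¹) := by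
    obtain rfl : w = (a + 3) * k - u - v := by linear_combination hsum
    simp only [edgeGap, ha]
    field_simp
    ring
  have hv : 0 ≤ v + k * ρ⁻¹ := by
    rw [← mul_nonneg_iff_of_pos_left (by positivity : 0 < ρ ^ 2 + ρ + 1), ← hcomb]
    positivity
  have hkρ' : k * ρ⁻¹ < 1 := by rwa [← div_eq_mul_inv, div_lt_one hρ]
  linarith

end EdgeInequalities

section LatticeStrip

/-- The lattice points of the region `l v < u ≤ h v`, `v ∈ s`. -/
noncomputable def latticeStrip (s : Finset ℤ) (l h : ℤ → ℤ) : Finset (ℤ × ℤ) :=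
  s.biUnion fun v => Ioc (l v) (h v) ×ˢ {v}

variable {s : Finset ℤ} {l h : ℤ → ℤ} {u v : ℤ}

lemma mem_latticeStrip : (u, v) ∈ latticeStrip s l h ↔ v ∈ s ∧ l v < u ∧ u ≤ h v := by
  simp only [latticeStrip, mem_biUnion, mem_product, mem_Ioc, mem_singleton]
  exact ⟨by rintro ⟨_, hv, hu, rfl⟩; exact ⟨hv, hu⟩, fun ⟨hv, hu⟩ => ⟨v, hv, hu, rfl⟩⟩

lemma card_latticeStrip (hlh : ∀ v ∈ s, l v ≤ h v) :
    (#(latticeStrip s l h) : ℤ) = ∑ v ∈ s, (h v - l v) := by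
  rw [latticeStrip, card_biUnion, Nat.cast_sum]
  · refine sum_congr rfl fun v hv => ?_
    rw [card_product, card_singleton, mul_one, Int.card_Ioc, Int.toNat_sub_of_le (hlh v hv)]
  · intro v _ v' _ hne
    exact disjoint_product.2 (Or.inr (disjoint_singleton.2 hne))

lemma two_mul_sum_Ico_zero_id {n : ℤ} (hn : 0 ≤ n) : 2 * ∑ v ∈ Ico 0 n, v = n * (n - 1) := by
  induction n, hn using Int.leInduction with
  | base => simp
  | succ n hn ih =>
    rw [← insert_Ico_right_eq_Ico_add_one hn, sum_insert right_notMem_Ico, mul_add, ih]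
    ring

lemma card_Ico_filter_two_mul_lt {n : ℤ} (hn : 0 ≤ n) :
    (#{v ∈ Ico 0 n | 2 * v < n} : ℤ) = (n + 1) / 2 := by
  have : {v ∈ Ico 0 n | 2 * v < n} = Ico 0 ((n + 1) / 2) := by
    ext v
    simp only [mem_filter, mem_Ico]
    omega
  rw [this, Int.card_Ico]
  omega

end LatticeStrip

section TrimmedSimplex

/-- The lattice points `(u, v)` for which `u`, `v` and `w = N - u - v` are nonnegative. -/
noncomputable def simplexPoints (N : ℤ) : Finset (ℤ × ℤ) :=
  latticeStrip (Ico 0 (N + 1)) (fun _ => -1) fun v => N - v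

/-- The cyclic shift `(u, v, w) ↦ (v, w, u)` of the triples of sum `N`, with `w` left out. -/
def cyclicShift (N : ℤ) : Equiv.Perm (ℤ × ℤ) where
  toFun p := (p.2, N - p.1 - p.2)
  invFun p := (N - p.1 - p.2, p.1)
  left_inv p := by ext <;> simp only; ring
  right_inv p := by ext <;> simp only; ring

/-- The largest integer `u` with `u ≤ ρ v + (2 - 1/(1 + ρ)) k`, where `ρ` is the largest root of
`f_a` and `0 ≤ v < k`. -/
def edgeFloor (a k v : ℤ) : ℤ :=
  (a + 1) * v + 2 * k - if 2 * v < k then 1 else 0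

/-- The lattice points of the corner which the inequality `u ≤ ρ v + (2 - 1/(1 + ρ)) k` cuts off the
simplex `u + v + w = (a + 3) k`; there `v < k` holds automatically. -/
noncomputable def cornerPoints (a k : ℤ) : Finset (ℤ × ℤ) :=
  latticeStrip (Ico 0 k) (edgeFloor a k) fun v => (a + 3) * k - v

/-- The corners cut off by the three cyclic shifts of `u ≤ ρ v + (2 - 1/(1 + ρ)) k`. -/
noncomputable def allCornerPoints (a k : ℤ) : Finset (ℤ × ℤ) :=
  cornerPoints a k ∪ ((cornerPoints a k).map (cyclicShift ((a + 3) * k)).toEmbedding ∪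
    (cornerPoints a k).map (cyclicShift ((a + 3) * k)).symm.toEmbedding)

/-- The simplex `u + v + w = (a + 3) k` without its three corners: these are the lattice points of
the dilated triangle `k T_a`. -/
noncomputable def trimmedSimplex (a k : ℤ) : Finset (ℤ × ℤ) :=
  simplexPoints ((a + 3) * k) \ allCornerPoints a k

variable {a k u v w : ℤ}

lemma mem_simplexPoints {N : ℤ} : (u, v) ∈ simplexPoints N ↔ 0 ≤ u ∧ 0 ≤ v ∧ u + v ≤ N := by
  rw [simplexPoints, mem_latticeStrip, mem_Ico]
  omega

lemma mem_map_cyclicShift {N : ℤ} {s : Finset (ℤ × ℤ)} (hsum : u + v + w = N) :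
    (u, v) ∈ s.map (cyclicShift N).toEmbedding ↔ (w, u) ∈ s := by
  rw [mem_map_equiv, ← show N - u - v = w by omega]
  rfl

lemma mem_map_cyclicShift_symm {N : ℤ} {s : Finset (ℤ × ℤ)} (hsum : u + v + w = N) :
    (u, v) ∈ s.map (cyclicShift N).symm.toEmbedding ↔ (v, w) ∈ s := by
  rw [mem_map_equiv, ← show N - u - v = w by omega]
  rfl

lemma mem_cornerPoints (hsum : u + v + w = (a + 3) * k) :
    (u, v) ∈ cornerPoints a k ↔ 0 ≤ v ∧ v < k ∧ edgeFloor a k v < u ∧ 0 ≤ w := by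
  rw [cornerPoints, mem_latticeStrip, mem_Ico]
  omega

lemma mem_allCornerPoints (hsum : u + v + w = (a + 3) * k) :
    (u, v) ∈ allCornerPoints a k ↔
      (u, v) ∈ cornerPoints a k ∨ (w, u) ∈ cornerPoints a k ∨ (v, w) ∈ cornerPoints a k := by
  rw [allCornerPoints, mem_union, mem_union, mem_map_cyclicShift hsum,
    mem_map_cyclicShift_symm hsum]

lemma mem_trimmedSimplex (hsum : u + v + w = (a + 3) * k) :
    (u, v) ∈ trimmedSimplex a k ↔ 0 ≤ u ∧ 0 ≤ v ∧ 0 ≤ w ∧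
      (u, v) ∉ cornerPoints a k ∧ (v, w) ∉ cornerPoints a k ∧ (w, u) ∉ cornerPoints a k := by
  have hw : u + v ≤ (a + 3) * k ↔ 0 ≤ w := by omega
  rw [trimmedSimplex, mem_sdiff, mem_simplexPoints, mem_allCornerPoints hsum, hw]
  tauto

lemma bounds_of_mem_cornerPoints (ha : -1 ≤ a) (hsum : u + v + w = (a + 3) * k)
    (h : (u, v) ∈ cornerPoints a k) : 2 * k ≤ u ∧ 0 ≤ v ∧ v < k ∧ 0 ≤ w := by
  obtain ⟨hv, hvk, hu, hw⟩ := (mem_cornerPoints hsum).1 h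
  have : 0 ≤ (a + 1) * v := mul_nonneg (by omega) hv
  rw [edgeFloor] at hu
  refine ⟨?_, hv, hvk, hw⟩
  split_ifs at hu <;> omega

lemma two_mul_card_simplexPoints {N : ℤ} (hN : 0 ≤ N) :
    2 * (#(simplexPoints N) : ℤ) = (N + 1) * (N + 2) := by
  have hsum := two_mul_sum_Ico_zero_id (show 0 ≤ N + 1 by omega)
  rw [simplexPoints, card_latticeStrip fun v hv => by rw [mem_Ico] at hv; omega]
  rw [sum_sub_distrib, sum_sub_distrib]
  simp only [sum_const, Int.card_Ico, nsmul_eq_mul, sub_zero,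
    Int.toNat_of_nonneg (show 0 ≤ N + 1 by omega)]
  linear_combination -hsum

lemma two_mul_card_cornerPoints (hk : 0 ≤ k) (hka : k ≤ a + 2) :
    2 * (#(cornerPoints a k) : ℤ) = a * k ^ 2 + (a + 2) * k + 2 * ((k + 1) / 2) := by
  have hle : ∀ v ∈ Ico 0 k, edgeFloor a k v ≤ (a + 3) * k - v := by
    intro v hv
    rw [mem_Ico] at hv
    have : (a + 2) * v ≤ (a + 2) * (k - 1) := by gcongr <;> omega
    rw [edgeFloor]
    split_ifs <;> linarith
  have hrow (v : ℤ) : (a + 3) * k - v - edgeFloor a k v =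
      (a + 1) * k - (a + 2) * v + if 2 * v < k then 1 else 0 := by
    rw [edgeFloor]; ring
  rw [cornerPoints, card_latticeStrip hle, sum_congr rfl fun v _ => hrow v, sum_add_distrib,
    sum_sub_distrib, ← mul_sum _ _ (a + 2)]
  simp only [sum_const, sum_boole, card_Ico_filter_two_mul_lt hk, Int.card_Ico, nsmul_eq_mul,
    sub_zero, Int.toNat_of_nonneg hk]
  linear_combination -(a + 2) * two_mul_sum_Ico_zero_id hk

lemma notMem_cornerPoints_of_mem (ha : -1 ≤ a) (hsum : u + v + w = (a + 3) * k)
    (h : (u, v) ∈ cornerPoints a k) : (v, w) ∉ cornerPoints a k := by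
  intro h'
  have := bounds_of_mem_cornerPoints ha hsum h
  have := bounds_of_mem_cornerPoints ha (w := u) (by omega) h'
  omega

lemma card_allCornerPoints (ha : -1 ≤ a) :
    #(allCornerPoints a k) = 3 * #(cornerPoints a k) := by
  have third (u v : ℤ) : ∃ w, u + v + w = (a + 3) * k := ⟨(a + 3) * k - u - v, by ring⟩
  rw [allCornerPoints, card_union_of_disjoint, card_union_of_disjoint, card_map, card_map]
  · ring
  all_goals
    simp only [disjoint_left, Prod.forall, mem_union]
    intro u v
    obtain ⟨w, hsum⟩ := third u v
    rw [mem_map_cyclicShift hsum, mem_map_cyclicShift_symm hsum]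
  · exact fun h h' => notMem_cornerPoints_of_mem ha (by omega) h' h
  · rintro h (h' | h')
    · exact notMem_cornerPoints_of_mem ha (by omega) h' h
    · exact notMem_cornerPoints_of_mem ha hsum h h'

lemma allCornerPoints_subset_simplexPoints (ha : -1 ≤ a) :
    allCornerPoints a k ⊆ simplexPoints ((a + 3) * k) := by
  rintro ⟨u, v⟩ h
  obtain ⟨w, hsum⟩ : ∃ w, u + v + w = (a + 3) * k := ⟨(a + 3) * k - u - v, by ring⟩
  rw [mem_simplexPoints]
  rcases (mem_allCornerPoints hsum).1 h with h | h | h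
  · have := bounds_of_mem_cornerPoints ha hsum h
    omega
  · have := bounds_of_mem_cornerPoints ha (w := v) (by omega) h
    omega
  · have := bounds_of_mem_cornerPoints ha (w := u) (by omega) h
    omega

theorem two_mul_card_trimmedSimplex (ha : -1 ≤ a) (hk : 0 ≤ k) (hka : k ≤ a + 2) :
    2 * (#(trimmedSimplex a k) : ℤ) =
      k ^ 2 * (a ^ 2 + 3 * a + 9) + 3 * k + 2 - 6 * ((k + 1) / 2) := by
  have hsimplex := two_mul_card_simplexPoints (mul_nonneg (by omega : 0 ≤ a + 3) hk)
  have hcorner := two_mul_card_cornerPoints hk hka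
  rw [trimmedSimplex, cast_card_sdiff (allCornerPoints_subset_simplexPoints ha),
    card_allCornerPoints ha]
  push_cast
  linear_combination hsimplex - 3 * hcorner

end TrimmedSimplex

section Rounding

variable {K : Type*} [Field K] [LinearOrder K] [IsStrictOrderedRing K] [FloorRing K]
  {a k u v w : ℤ} {ρ : K}

lemma floor_edge_error (hρ : 0 < ρ) (hkρ : (k : K) < ρ) (hv : 0 ≤ v) (hvk : v < k) :
    ⌊(1 + ρ)⁻¹ * (2 * v - k + ρ⁻¹ * v)⌋ = -if 2 * v < k then 1 else 0 := by
  have : (0 : K) ≤ v := by exact_mod_cast hv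
  have hvk' : (v : K) + 1 ≤ k := by exact_mod_cast hvk
  have hτ : 0 < (1 + ρ)⁻¹ := by positivity
  have hτv : 0 ≤ (1 + ρ)⁻¹ * v := by positivity
  have hτk : (1 + ρ)⁻¹ * k < 1 := by
    rw [inv_mul_lt_one₀ (by positivity)]
    linarith
  have hρv : 0 ≤ ρ⁻¹ * v := by positivity
  have hρv' : ρ⁻¹ * v < 1 := by
    rw [inv_mul_lt_one₀ hρ]
    linarith
  have herr : (1 + ρ)⁻¹ * (2 * v - k + ρ⁻¹ * v) = ρ⁻¹ * v + (1 + ρ)⁻¹ * (v - k) := by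
    field_simp
    ring
  rw [Int.floor_eq_iff]
  split_ifs with h
  · have h' : (2 * v + 1 : K) ≤ k := by exact_mod_cast h
    have hneg : (1 + ρ)⁻¹ * (2 * v - k + ρ⁻¹ * v) < 0 :=
      mul_neg_of_pos_of_neg hτ (by linarith)
    constructor <;> push_cast <;> linarith
  · have h' : (k : K) ≤ 2 * v := by exact_mod_cast not_lt.1 h
    have hnonneg : 0 ≤ (1 + ρ)⁻¹ * (2 * v - k + ρ⁻¹ * v) := mul_nonneg hτ.le (by linarith)
    have : (1 + ρ)⁻¹ * (v - k) < 0 := mul_neg_of_pos_of_neg hτ (by linarith)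
    constructor <;> push_cast <;> linarith

lemma floor_edge_eq_edgeFloor (hρ : 0 < ρ) (ha : (a : K) = ρ - 1 - ρ⁻¹ - (1 + ρ)⁻¹)
    (hkρ : (k : K) < ρ) (hv : 0 ≤ v) (hvk : v < k) :
    ⌊ρ * v + (2 - (1 + ρ)⁻¹) * k⌋ = edgeFloor a k v := by
  have hsplit : ρ * v + (2 - (1 + ρ)⁻¹) * k =
      ((a + 1) * v + 2 * k : ℤ) + (1 + ρ)⁻¹ * (2 * v - k + ρ⁻¹ * v) := by
    push_cast
    rw [ha]
    field_simp
    ring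
  rw [hsplit, Int.floor_intCast_add, floor_edge_error hρ hkρ hv hvk, edgeFloor, ← sub_eq_add_neg]

lemma edgeGap_nonneg_iff_notMem_cornerPoints (hρ : 0 < ρ)
    (ha : (a : K) = ρ - 1 - ρ⁻¹ - (1 + ρ)⁻¹) (hk : 0 ≤ k) (hkρ : (k : K) < ρ)
    (hsum : u + v + w = (a + 3) * k) (hv : 0 ≤ v) (hw : 0 ≤ w) :
    0 ≤ edgeGap ρ k u v ↔ (u, v) ∉ cornerPoints a k := by
  rw [mem_cornerPoints hsum]
  rcases lt_or_ge v k with hvk | hkv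
  · rw [edgeGap, sub_nonneg, ← Int.le_floor, floor_edge_eq_edgeFloor hρ ha hkρ hv hvk, ← not_lt]
    tauto
  · suffices 0 ≤ edgeGap ρ k u v by simp [this, hkv.not_gt]
    have : (0 : K) ≤ k := by exact_mod_cast hk
    have hkv' : (k : K) ≤ v := by exact_mod_cast hkv
    have : (0 : K) ≤ w := by exact_mod_cast hw
    have hsum' : (u : K) + v + w = (a + 3) * k := by exact_mod_cast hsum
    have hgap : edgeGap ρ k u v = (1 + ρ) * (v - k) + (1 + ρ⁻¹) * k + w := by
      rw [edgeGap]
      linear_combination -hsum' - k * ha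
    rw [hgap]
    have := sub_nonneg.2 hkv'
    positivity

theorem edgeGap_nonneg_iff_mem_trimmedSimplex (hρ : 0 < ρ)
    (ha : (a : K) = ρ - 1 - ρ⁻¹ - (1 + ρ)⁻¹) (hk : 0 ≤ k) (hkρ : (k : K) < ρ)
    (hsum : u + v + w = (a + 3) * k) :
    (0 ≤ edgeGap ρ k u v ∧ 0 ≤ edgeGap ρ k v w ∧ 0 ≤ edgeGap ρ k w u) ↔
      (u, v) ∈ trimmedSimplex a k := by
  have hvwu : v + w + u = (a + 3) * k := by omega
  have hwuv : w + u + v = (a + 3) * k := by omega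
  have nonneg {u v w : ℤ} (hsum : u + v + w = (a + 3) * k) (huv : 0 ≤ edgeGap ρ k u v)
      (hwu : 0 ≤ edgeGap ρ k w u) : 0 ≤ v := by
    have : (-1 : K) < v :=
      neg_one_lt_of_edgeGap_nonneg hρ ha hkρ (by exact_mod_cast hsum) huv hwu
    exact_mod_cast this
  have hnonneg : 0 ≤ edgeGap ρ k u v ∧ 0 ≤ edgeGap ρ k v w ∧ 0 ≤ edgeGap ρ k w u →
      0 ≤ u ∧ 0 ≤ v ∧ 0 ≤ w :=
    fun ⟨huv, hvw, hwu⟩ => ⟨nonneg hwuv hwu hvw, nonneg hsum huv hwu, nonneg hvwu hvw huv⟩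
  rw [mem_trimmedSimplex hsum, ← and_iff_right_of_imp hnonneg, and_assoc, and_assoc]
  refine and_congr_right fun hu => and_congr_right fun hv => and_congr_right fun hw => ?_
  rw [edgeGap_nonneg_iff_notMem_cornerPoints hρ ha hk hkρ hsum hv hw,
    edgeGap_nonneg_iff_notMem_cornerPoints hρ ha hk hkρ hvwu hw hu,
    edgeGap_nonneg_iff_notMem_cornerPoints hρ ha hk hkρ hwuv hu hv]

end Rounding

section Count

/-- The unimodular change of coordinates `(x, y) ↦ (x + k, y - (a + 1) x - k)`. -/
def edgeCoordinates (a k : ℤ) : Equiv.Perm (ℤ × ℤ) where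
  toFun p := (p.1 + k, p.2 - (a + 1) * p.1 - k)
  invFun p := (p.1 - k, p.2 + (a + 1) * (p.1 - k) + k)
  left_inv p := by ext <;> simp only <;> ring
  right_inv p := by ext <;> simp only <;> ring

variable {K : Type*} [Field K] [LinearOrder K] [IsStrictOrderedRing K] [FloorRing K]
  {a k : ℤ} {ρ₁ ρ₂ ρ₃ : K}

theorem setOf_mem_smul_convexHull_eq_preimage (hk : 0 < k) (hka : k ≤ a + 1)
    (h12 : ρ₁ < ρ₂) (h23 : ρ₂ < ρ₃) (h1 : simplestCubic (a : K) ρ₁ = 0)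
    (h2 : simplestCubic (a : K) ρ₂ = 0) (h3 : simplestCubic (a : K) ρ₃ = 0) :
    {p : ℤ × ℤ | ((p.1 : K), (p.2 : K)) ∈
        (k : K) • convexHull K {(ρ₁, ρ₁ ^ 2), (ρ₂, ρ₂ ^ 2), (ρ₃, ρ₃ ^ 2)}} =
      edgeCoordinates a k ⁻¹' trimmedSimplex a k := by
  obtain ⟨hρ, -, -⟩ := roots_eq_of_simplestCubic_eq_zero h12 h23 h1 h2 h3
  have ha := param_eq_of_simplestCubic_eq_zero h3
  have hkρ : (k : K) < ρ₃ := by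
    have : (k : K) ≤ a + 1 := by exact_mod_cast hka
    exact this.trans_lt (add_one_lt_of_param_eq hρ ha)
  ext ⟨x, y⟩
  obtain ⟨w, hsum⟩ : ∃ w, (x + k) + (y - (a + 1) * x - k) + w = (a + 3) * k :=
    ⟨(a + 3) * k - (x + k) - (y - (a + 1) * x - k), by ring⟩
  rw [Set.mem_ofPred_eq, Set.mem_preimage, mem_coe, edgeCoordinates, Equiv.coe_fn_mk,
    ← edgeGap_nonneg_iff_mem_trimmedSimplex hρ ha hk.le hkρ hsum]
  exact mem_smul_convexHull_iff_edgeGap_nonneg h12 h23 h1 h2 h3 (by exact_mod_cast hk)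
    (by push_cast; rfl) (by push_cast; rfl) (by exact_mod_cast hsum)

theorem simplest_cubic_lattice_point_count_general (hk : 0 < k) (hka : k ≤ a + 1)
    (h12 : ρ₁ < ρ₂) (h23 : ρ₂ < ρ₃) (h1 : simplestCubic (a : K) ρ₁ = 0)
    (h2 : simplestCubic (a : K) ρ₂ = 0) (h3 : simplestCubic (a : K) ρ₃ = 0) :
    (Set.ncard {p : ℤ × ℤ | ((p.1 : K), (p.2 : K)) ∈
        (k : K) • convexHull K {(ρ₁, ρ₁ ^ 2), (ρ₂, ρ₂ ^ 2), (ρ₃, ρ₃ ^ 2)}} : K) =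
      k ^ 2 * (a ^ 2 + 3 * a + 9) / 2 + (if Even k then 1 else -1 / 2) := by
  have hcount : (2 * #(trimmedSimplex a k) : ℤ) =
      k ^ 2 * (a ^ 2 + 3 * a + 9) + if Even k then 2 else -1 := by
    rw [two_mul_card_trimmedSimplex (by omega) hk.le (by omega)]
    split_ifs <;> grind
  rw [setOf_mem_smul_convexHull_eq_preimage hk hka h12 h23 h1 h2 h3,
    Set.ncard_preimage_of_injective_subset_range (edgeCoordinates a k).injective
      (by simp), Set.ncard_coe_finset]
  have hcount' := congrArg (Int.cast : ℤ → K) hcount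
  push_cast at hcount'
  split_ifs at hcount' ⊢ <;> linarith

end Count

theorem simplest_cubic_lattice_point_count (a k : ℤ) (ha : 1 ≤ a)
    (hk1 : 1 ≤ k) (hka : k ≤ a) (ρ₁ ρ₂ ρ₃ : ℝ)
    (h12 : ρ₁ < ρ₂) (h23 : ρ₂ < ρ₃)
    (h1 : ρ₁^3 - a*ρ₁^2 - (a+3)*ρ₁ - 1 = 0)
    (h2 : ρ₂^3 - a*ρ₂^2 - (a+3)*ρ₂ - 1 = 0)
    (h3 : ρ₃^3 - a*ρ₃^2 - (a+3)*ρ₃ - 1 = 0)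
    (T : Set (ℝ × ℝ))
    (hT : T = convexHull ℝ {(ρ₁, ρ₁^2), (ρ₂, ρ₂^2), (ρ₃, ρ₃^2)}) :
    (Set.ncard {p : ℤ × ℤ | ((p.1 : ℝ), (p.2 : ℝ)) ∈ (fun x => (k : ℝ) • x) '' T} : ℝ) =
      k^2 * (a^2 + 3*a + 9) / 2 + (if Even k then 1 else -1/2) := by
  subst hT
  exact simplest_cubic_lattice_point_count_general (by omega) (by omega) h12 h23 h1 h2 h3
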